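/- Consider the uncontrolled randomised switching problem in dimension d = 3 with stochastic matrix P having rows (0, p, 1−p), (q, 0, 1−q), (r, 1−r, 0) where 0 < p, q, r < 1, and cost vector c̄ ∈ ℝ³ such that the domain D has nonempty interior. Then there exist a function H : ℝ³ → S₃(ℝ) (symmetric 3×3 matrices) and a constant L ≥ 1 such that: (1) L^{-1}|v|² ≤ vᵀ H(y) v ≤ L|v|² for all y ∈ ℝ³ and v ∈ ℝ³, and |H(y)| ≤ L; (2) H is of class C¹ with |∂_y H| ≤ L, and y ↦ H(y)^{-1} is of class C² with |H^{-1}| + |∂_y H^{-1}| + |∂²_{yy} H^{-1}| ≤ L; (3) for every y ∈ D and every v in the outward normal cone C(y), the vector H(y)v belongs to the reflection cone C_o(y) := { −∑_{i=1}^3 α_i e_i : α_i ≥ 0 and α_i = 0 whenever y_i > ∑_j P_{i,j} y_j − c̄_i }. -/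

import Mathlib

open Matrix

/-!
Put `Q = 1 - P`. The stationary vector `m > 0` of `P` satisfies `m ᵥ* Q = 0`, so
`m ⬝ᵥ (Q *ᵥ y + c)` is the constant `m ⬝ᵥ c`, which is positive because `D` has interior points.
Hence `λ_i(y) = m_i (Q y + c)_i / (m ⬝ᵥ c)` are affine functions of sum `1` on the whole space; they
are the barycentric coordinates of the simplex `D`, and everywhere some `λ_k` is at least `1 / n`.

In dimension three, `P` satisfies detailed balance once a state `k` is removed. The Laplacian of the
corresponding electrical network, grounded at `k`, is a positive definite matrix `V_k` whose column
`i ≠ k` is a positive multiple of the normal `Q_i`. Take `H = G⁻¹` with `G = ∑ k, χ(λ_k) V_k` and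
`χ` a smooth step vanishing on `(-∞, 0]`. On the face `i` the matrix `V_i` drops out, so `G e_i` is
a positive multiple of `Q_i`, that is, `H Q_i` is a positive multiple of `e_i`. The bounds are
uniform because `G` takes its values in a compact set of positive definite matrices.
-/

section BoundedContDiff

open Filter Set Topology
open scoped ContDiff

variable {ι E F G : Type*} [NormedAddCommGroup E] [NormedSpace ℝ E] [NormedAddCommGroup F]
  [NormedSpace ℝ F] [NormedAddCommGroup G] [NormedSpace ℝ G] {n : ℕ∞ω} {f : E → F}

/-- The class `C_bⁿ`: functions of class `Cⁿ` whose derivatives of order at most `n`, the function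
itself included, are each uniformly bounded. -/
def BoundedContDiff (n : ℕ∞ω) (f : E → F) : Prop :=
  ContDiff ℝ n f ∧ ∀ k : ℕ, k ≤ n → ∃ C, ∀ x, ‖iteratedFDeriv ℝ k f x‖ ≤ C

namespace BoundedContDiff

theorem contDiff (hf : BoundedContDiff n f) : ContDiff ℝ n f := hf.1

theorem eventually_norm_iteratedFDeriv_le (hf : BoundedContDiff n f) {k : ℕ} (hk : k ≤ n) :
    ∀ᶠ L in atTop, ∀ x, ‖iteratedFDeriv ℝ k f x‖ ≤ L := by
  obtain ⟨C, hC⟩ := hf.2 k hk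
  filter_upwards [eventually_ge_atTop C] with L hL x using (hC x).trans hL

theorem eventually_norm_le (hf : BoundedContDiff n f) : ∀ᶠ L in atTop, ∀ x, ‖f x‖ ≤ L := by
  simpa only [norm_iteratedFDeriv_zero] using
    hf.eventually_norm_iteratedFDeriv_le (k := 0) (by simp)

theorem eventually_norm_fderiv_le (hf : BoundedContDiff n f) (hn : 1 ≤ n) :
    ∀ᶠ L in atTop, ∀ x, ‖fderiv ℝ f x‖ ≤ L := by
  simpa only [norm_iteratedFDeriv_one] using
    hf.eventually_norm_iteratedFDeriv_le (k := 1) (by simpa using hn)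

theorem eventually_norm_fderiv_fderiv_le (hf : BoundedContDiff n f) (hn : 2 ≤ n) :
    ∀ᶠ L in atTop, ∀ x, ‖fderiv ℝ (fderiv ℝ f) x‖ ≤ L := by
  simpa only [← norm_iteratedFDeriv_one, norm_iteratedFDeriv_fderiv] using
    hf.eventually_norm_iteratedFDeriv_le (k := 2) (by simpa using hn)

theorem clm_comp (hf : BoundedContDiff n f) (T : F →L[ℝ] G) : BoundedContDiff n (T ∘ f) := by
  refine ⟨T.contDiff.comp hf.contDiff, fun k hk => ?_⟩
  obtain ⟨C, hC⟩ := hf.2 k hk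
  refine ⟨‖T‖ * C, fun x => ?_⟩
  calc ‖iteratedFDeriv ℝ k (T ∘ f) x‖
      ≤ ‖T‖ * ‖iteratedFDeriv ℝ k f x‖ :=
        T.norm_iteratedFDeriv_comp_left hf.contDiff.contDiffAt hk
    _ ≤ ‖T‖ * C := by gcongr; exact hC x

theorem comp_clm_add_const (hf : BoundedContDiff n f) (T : G →L[ℝ] E) (a : E) :
    BoundedContDiff n fun x => f (T x + a) := by
  refine ⟨hf.contDiff.comp (T.contDiff.add contDiff_const), fun k hk => ?_⟩
  obtain ⟨C, hC⟩ := hf.2 k hk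
  have hshift : ContDiff ℝ n fun z => f (z + a) := hf.contDiff.comp (contDiff_id.add contDiff_const)
  refine ⟨C * ∏ _ : Fin k, ‖T‖, fun x => ?_⟩
  change ‖iteratedFDeriv ℝ k ((fun z => f (z + a)) ∘ T) x‖ ≤ _
  rw [T.iteratedFDeriv_comp_right hshift x hk, iteratedFDeriv_comp_add_right]
  refine (ContinuousMultilinearMap.norm_compContinuousLinearMap_le _ _).trans ?_
  gcongr
  exact hC _

theorem sum {f : ι → E → F} {s : Finset ι} (hf : ∀ i ∈ s, BoundedContDiff n (f i)) :
    BoundedContDiff n fun x => ∑ i ∈ s, f i x := by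
  refine ⟨ContDiff.sum fun i hi => (hf i hi).contDiff, fun k hk => ?_⟩
  choose! C hC using fun i hi => (hf i hi).2 k hk
  refine ⟨∑ i ∈ s, C i, fun x => ?_⟩
  rw [iteratedFDeriv_sum fun i hi => (hf i hi).contDiff.of_le hk, Finset.sum_apply]
  exact norm_sum_le_of_le _ fun i hi => hC i hi x

theorem comp_of_mem_isCompact (hf : BoundedContDiff n f) {g : F → G} {K U : Set F}
    (hK : IsCompact K) (hU : IsOpen U) (hKU : K ⊆ U) (hg : ContDiffOn ℝ n g U)
    (hfK : ∀ x, f x ∈ K) : BoundedContDiff n (g ∘ f) := by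
  have hfU : ∀ x, f x ∈ U := fun x => hKU (hfK x)
  refine ⟨hg.comp_contDiff hf.contDiff hfU, fun k hk => ?_⟩
  have hgK : ∀ᶠ C in atTop, ∀ i ≤ k, ∀ x, ‖iteratedFDerivWithin ℝ i g U (f x)‖ ≤ C := by
    refine (eventually_all_finite (finite_Iic k)).2 fun i hi => ?_
    have hcont := hg.continuousOn_iteratedFDerivWithin
      ((Nat.cast_le.2 hi).trans hk) hU.uniqueDiffOn
    obtain ⟨C, hC⟩ := hK.exists_bound_of_continuousOn (hcont.mono hKU)
    filter_upwards [eventually_ge_atTop C] with L hL x using (hC _ (hfK x)).trans hL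
  have hfD : ∀ᶠ D in atTop, ∀ i ≤ k, ∀ x, ‖iteratedFDeriv ℝ i f x‖ ≤ D :=
    (eventually_all_finite (finite_Iic k)).2 fun i hi =>
      hf.eventually_norm_iteratedFDeriv_le ((Nat.cast_le.2 hi).trans hk)
  obtain ⟨C, hC⟩ := hgK.exists
  obtain ⟨D, hD, hD1⟩ := (hfD.and (eventually_ge_atTop 1)).exists
  refine ⟨k.factorial * C * D ^ k, fun x => ?_⟩
  exact norm_iteratedFDeriv_comp_le' (range_subset_iff.2 hfU) hU.uniqueDiffOn hg hf.contDiff hk x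
    (fun i hi => hC i hi x)
    fun i hi hik => (hD i hik x).trans (le_self_pow₀ hD1 (Nat.one_le_iff_ne_zero.1 hi))

end BoundedContDiff

theorem hasCompactSupport_fderiv_smoothTransition :
    HasCompactSupport (fderiv ℝ Real.smoothTransition) := by
  refine HasCompactSupport.intro (isCompact_Icc (a := (0 : ℝ)) (b := 1)) fun x hx => ?_
  have hlocal : ∃ C : ℝ, Real.smoothTransition =ᶠ[𝓝 x] fun _ => C := by
    rcases not_and_or.1 hx with h | h
    · exact ⟨0, (eventually_lt_nhds (not_le.1 h)).mono fun _ hz =>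
        Real.smoothTransition.zero_of_nonpos hz.le⟩
    · exact ⟨1, (eventually_gt_nhds (not_le.1 h)).mono fun _ hz =>
        Real.smoothTransition.one_of_one_le hz.le⟩
  obtain ⟨C, hC⟩ := hlocal
  rw [hC.fderiv_eq, fderiv_const_apply]

theorem boundedContDiff_smoothTransition (n : ℕ∞) :
    BoundedContDiff n Real.smoothTransition := by
  refine ⟨Real.smoothTransition.contDiff, fun k _ => ?_⟩
  rcases k with _ | k
  · refine ⟨1, fun x => ?_⟩
    rw [norm_iteratedFDeriv_zero, Real.norm_of_nonneg (Real.smoothTransition.nonneg x)]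
    exact Real.smoothTransition.le_one x
  · have hderiv : ContDiff ℝ k (fderiv ℝ Real.smoothTransition) :=
      (Real.smoothTransition.contDiff (n := (k + 1 : ℕ))).fderiv_right (by simp)
    simp_rw [← norm_iteratedFDeriv_fderiv]
    exact (hasCompactSupport_fderiv_smoothTransition.iteratedFDeriv k).exists_bound_of_continuous
      (hderiv.continuous_iteratedFDeriv le_rfl)

end BoundedContDiff

theorem eventually_inv_le_and_le_of_isCompact {X : Type*} [TopologicalSpace X] {S : Set X}
    (hS : IsCompact S) {g : X → ℝ} (hg : ContinuousOn g S) (hpos : ∀ x ∈ S, 0 < g x) :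
    ∀ᶠ L : ℝ in Filter.atTop, ∀ x ∈ S, L⁻¹ ≤ g x ∧ g x ≤ L := by
  obtain ⟨a, ha⟩ := hS.exists_bound_of_continuousOn (hg.inv₀ fun x hx => (hpos x hx).ne')
  obtain ⟨b, hb⟩ := hS.exists_bound_of_continuousOn hg
  filter_upwards [Filter.eventually_ge_atTop a, Filter.eventually_ge_atTop b] with L haL hbL x hx
  exact ⟨inv_le_of_inv_le₀ (hpos x hx) ((le_abs_self _).trans ((ha x hx).trans haL)),
    (le_abs_self _).trans ((hb x hx).trans hbL)⟩

section PosDef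

open Filter Set
open scoped ContDiff Matrix.Norms.Operator

variable {ι E : Type*} [Fintype ι] [NormedAddCommGroup E] [NormedSpace ℝ E]
  {n : ℕ∞ω} {f : E → Matrix ι ι ℝ} {K : Set (Matrix ι ι ℝ)}

theorem BoundedContDiff.matrix_apply (hf : BoundedContDiff n f) (i j : ι) :
    BoundedContDiff n fun x => f x i j :=
  hf.clm_comp (Matrix.entryLinearMap ℝ ℝ i j).toContinuousLinearMap

theorem eventually_quadraticForm_bounds (hK : IsCompact K) (hpos : ∀ M ∈ K, M.PosDef) :
    ∀ᶠ L : ℝ in atTop, ∀ M ∈ K, ∀ v : ι → ℝ,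
      L⁻¹ * (v ⬝ᵥ v) ≤ v ⬝ᵥ (M *ᵥ v) ∧ v ⬝ᵥ (M *ᵥ v) ≤ L * (v ⬝ᵥ v) := by
  let rayleigh : Matrix ι ι ℝ × (ι → ℝ) → ℝ := fun x => x.2 ⬝ᵥ (x.1 *ᵥ x.2) / (x.2 ⬝ᵥ x.2)
  have hself {u : ι → ℝ} (hu : u ≠ 0) : 0 < u ⬝ᵥ u := by
    simpa using dotProduct_star_self_pos_iff.2 hu
  have hne {x : Matrix ι ι ℝ × (ι → ℝ)} (hx : x ∈ K ×ˢ Metric.sphere 0 1) : x.2 ≠ 0 :=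
    ne_zero_of_mem_unit_sphere ⟨x.2, hx.2⟩
  have hcont : ContinuousOn rayleigh (K ×ˢ Metric.sphere 0 1) :=
    ContinuousOn.div (by fun_prop) (by fun_prop) fun x hx => (hself (hne hx)).ne'
  have hrpos : ∀ x ∈ K ×ˢ Metric.sphere 0 1, 0 < rayleigh x := fun x hx =>
    div_pos (by simpa using (hpos x.1 hx.1).dotProduct_mulVec_pos (hne hx)) (hself (hne hx))
  filter_upwards [eventually_inv_le_and_le_of_isCompact (hK.prod (isCompact_sphere 0 1))
    hcont hrpos] with L hL M hM v
  rcases eq_or_ne v 0 with rfl | hv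
  · simp
  have hvn : ‖v‖⁻¹ ≠ 0 := inv_ne_zero (norm_ne_zero_iff.2 hv)
  have hunit : ‖v‖⁻¹ • v ∈ Metric.sphere (0 : ι → ℝ) 1 := by
    simpa using norm_smul_inv_norm (𝕜 := ℝ) hv
  have hscale : rayleigh (M, ‖v‖⁻¹ • v) = v ⬝ᵥ (M *ᵥ v) / (v ⬝ᵥ v) := by
    simp only [rayleigh, mulVec_smul, smul_dotProduct, dotProduct_smul, smul_eq_mul]
    rw [mul_div_mul_left _ _ hvn, mul_div_mul_left _ _ hvn]
  have hbound := hL (M, ‖v‖⁻¹ • v) ⟨hM, hunit⟩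
  rwa [hscale, le_div_iff₀ (hself hv), div_le_iff₀ (hself hv)] at hbound

variable [DecidableEq ι]

theorem contDiffOn_matrix_inv :
    ContDiffOn ℝ n (fun M : Matrix ι ι ℝ => M⁻¹) {M | IsUnit M} := by
  simp_rw [Matrix.nonsing_inv_eq_ringInverse]
  rintro _ ⟨u, rfl⟩
  exact (contDiffAt_ringInverse ℝ u).contDiffWithinAt

theorem BoundedContDiff.matrix_inv (hf : BoundedContDiff n f) (hK : IsCompact K)
    (hunit : ∀ M ∈ K, IsUnit M) (hfK : ∀ x, f x ∈ K) : BoundedContDiff n fun x => (f x)⁻¹ :=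
  hf.comp_of_mem_isCompact hK Units.isOpen hunit contDiffOn_matrix_inv hfK

theorem isCompact_image_matrix_inv (hK : IsCompact K) (hunit : ∀ M ∈ K, IsUnit M) :
    IsCompact ((fun M : Matrix ι ι ℝ => M⁻¹) '' K) :=
  hK.image_of_continuousOn ((contDiffOn_matrix_inv (n := 0)).continuousOn.mono hunit)

end PosDef

section WeightedLaplacian

variable {ι : Type*} [Fintype ι] [DecidableEq ι] {a : Matrix ι ι ℝ}

/-- The Laplacian of the graph on `ι` with edge weights `a`; loops `a i i` do not contribute. -/
def weightedLaplacian (a : Matrix ι ι ℝ) : Matrix ι ι ℝ :=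
  diagonal (fun i => ∑ j, a i j) - a

theorem isSymm_weightedLaplacian (ha : a.IsSymm) : (weightedLaplacian a).IsSymm :=
  (isSymm_diagonal _).sub ha

theorem dotProduct_weightedLaplacian_mulVec (ha : a.IsSymm) (v : ι → ℝ) :
    v ⬝ᵥ (weightedLaplacian a *ᵥ v) = (∑ i, ∑ j, a i j * (v i - v j) ^ 2) / 2 := by
  have hquad : v ⬝ᵥ (weightedLaplacian a *ᵥ v)
      = ∑ i, ∑ j, a i j * v i ^ 2 - ∑ i, ∑ j, a i j * (v i * v j) := by
    rw [weightedLaplacian, sub_mulVec, dotProduct_sub]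
    simp only [dotProduct, mulVec_diagonal]
    simp only [mulVec, dotProduct, Finset.mul_sum, Finset.sum_mul]
    congr 1 <;> exact Finset.sum_congr rfl fun i _ => Finset.sum_congr rfl fun j _ => by ring
  have hexpand : ∑ i, ∑ j, a i j * (v i - v j) ^ 2
      = ∑ i, ∑ j, a i j * v i ^ 2 - 2 * ∑ i, ∑ j, a i j * (v i * v j)
        + ∑ i, ∑ j, a i j * v j ^ 2 := by
    simp only [Finset.mul_sum, ← Finset.sum_sub_distrib, ← Finset.sum_add_distrib]
    exact Finset.sum_congr rfl fun i _ => Finset.sum_congr rfl fun j _ => by ring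
  have hswap : ∑ i, ∑ j, a i j * v j ^ 2 = ∑ i, ∑ j, a i j * v i ^ 2 := by
    rw [Finset.sum_comm]
    simp_rw [ha.apply]
  rw [hquad, hexpand, hswap]
  ring

theorem posDef_weightedLaplacian_add_single (ha : a.IsSymm) (ha0 : ∀ i j, 0 ≤ a i j) {k : ι}
    (hconn : ∀ i, Relation.ReflTransGen (fun i j => 0 < a i j) i k) :
    (weightedLaplacian a + single k k 1).PosDef := by
  have hsymm : (weightedLaplacian a + single k k 1).IsSymm :=
    (isSymm_weightedLaplacian ha).add (by simp [IsSymm])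
  refine .of_dotProduct_mulVec_pos hsymm fun v hv => ?_
  have hquad : v ⬝ᵥ ((weightedLaplacian a + single k k 1) *ᵥ v)
      = (∑ i, ∑ j, a i j * (v i - v j) ^ 2) / 2 + v k ^ 2 := by
    rw [add_mulVec, dotProduct_add, dotProduct_weightedLaplacian_mulVec ha, single_mulVec, one_mul,
      ← Pi.single, dotProduct_single, sq]
  have hterm (i j : ι) : 0 ≤ a i j * (v i - v j) ^ 2 := mul_nonneg (ha0 i j) (sq_nonneg _)
  have hrow (i : ι) : 0 ≤ ∑ j, a i j * (v i - v j) ^ 2 := Finset.sum_nonneg fun j _ => hterm i j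
  have henergy : 0 ≤ ∑ i, ∑ j, a i j * (v i - v j) ^ 2 := Finset.sum_nonneg fun i _ => hrow i
  rw [star_trivial, hquad]
  contrapose! hv
  have hk : v k = 0 := by nlinarith [sq_nonneg (v k)]
  have hzero : ∑ i, ∑ j, a i j * (v i - v j) ^ 2 = 0 := by linarith [sq_nonneg (v k)]
  have hedge {i j : ι} (hij : 0 < a i j) : v i = v j := by
    have hrow0 := (Fintype.sum_eq_zero_iff_of_nonneg hrow).1 hzero
    have hterm0 := (Fintype.sum_eq_zero_iff_of_nonneg (hterm i)).1 (congrFun hrow0 i)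
    have hsq := (mul_eq_zero.1 (congrFun hterm0 j)).resolve_left hij.ne'
    exact sub_eq_zero.1 (pow_eq_zero_iff two_ne_zero |>.1 hsq)
  funext i
  change v i = 0
  induction hconn i using Relation.ReflTransGen.head_induction_on with
  | refl => exact hk
  | head hij _ ih => rw [hedge hij, ih]

end WeightedLaplacian

section StochasticMatrix

open Relation

variable {ι : Type*}

theorem reflTransGen_of_isIrreducible {A : Matrix ι ι ℝ} (hA : A.IsIrreducible) (i j : ι) :
    ReflTransGen (fun i j => 0 < A i j) i j := by
  let : Quiver ι := A.toQuiver
  obtain ⟨path, -⟩ := hA.connected i j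
  induction path with
  | nil => exact .refl
  | cons _ edge ih => exact ih.tail edge.down

theorem reflTransGen_and_ne {R : ι → ι → Prop} {i k : ι} (h : ReflTransGen R i k) :
    ReflTransGen (fun i j => i ≠ k ∧ R i j) i k := by
  induction h using ReflTransGen.head_induction_on with
  | refl => exact .refl
  | @head i j hij _ ih =>
    rcases eq_or_ne i k with rfl | hik
    · exact .refl
    · exact ih.head ⟨hik, hij⟩

theorem isIrreducible_of_pos [Nontrivial ι] {A : Matrix ι ι ℝ} (hA0 : ∀ i j, 0 ≤ A i j)
    (hA : ∀ i j, i ≠ j → 0 < A i j) : A.IsIrreducible := by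
  let : Quiver ι := A.toQuiver
  let edge {i j : ι} (hij : i ≠ j) : i ⟶ j := PLift.up (hA i j hij)
  refine ⟨hA0, fun i j => ?_⟩
  rcases eq_or_ne i j with rfl | hij
  · obtain ⟨l, hl⟩ := exists_ne i
    exact ⟨(edge hl.symm).toPath.cons (edge hl), Nat.succ_pos _⟩
  · exact ⟨(edge hij).toPath, Nat.succ_pos _⟩

variable [Fintype ι] [DecidableEq ι] {P : Matrix ι ι ℝ}

theorem exists_ne_zero_vecMul_eq_self [Nonempty ι] (hP : P ∈ rowStochastic ℝ ι) :
    ∃ m : ι → ℝ, m ≠ 0 ∧ m ᵥ* P = m := by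
  have hker : (1 - P) *ᵥ 1 = 0 := by
    rw [sub_mulVec, one_mulVec, one_vecMul_of_mem_rowStochastic hP, sub_self]
  obtain ⟨m, hm, hmP⟩ := exists_vecMul_eq_zero_iff.2
    (exists_mulVec_eq_zero_iff.1 ⟨1, one_ne_zero, hker⟩)
  rw [vecMul_sub, vecMul_one, sub_eq_zero] at hmP
  exact ⟨m, hm, hmP.symm⟩

-- `|m| ≤ |m| P` entrywise, and both sides have the same total mass.
theorem abs_vecMul_eq_self (hP : P ∈ rowStochastic ℝ ι) {m : ι → ℝ} (hm : m ᵥ* P = m) :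
    |m| ᵥ* P = |m| := by
  have hle (j : ι) : |m| j ≤ (|m| ᵥ* P) j := by
    calc |m j| = |∑ i, m i * P i j| := by rw [← congrFun hm j]; rfl
      _ ≤ ∑ i, |m i * P i j| := Finset.abs_sum_le_sum_abs _ _
      _ = ∑ i, |m i| * P i j := by
        simp_rw [abs_mul, abs_of_nonneg (nonneg_of_mem_rowStochastic hP)]
  have hmass : ∑ j, |m| j = ∑ j, (|m| ᵥ* P) j := by
    simp_rw [vecMul, dotProduct]
    rw [Finset.sum_comm]
    simp_rw [← Finset.mul_sum, sum_row_of_mem_rowStochastic hP, mul_one]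
  funext j
  exact ((Finset.sum_eq_sum_iff_of_le fun j _ => hle j).1 hmass j (Finset.mem_univ j)).symm

theorem exists_pos_vecMul_eq_self [Nonempty ι] (hP : P ∈ rowStochastic ℝ ι)
    (hirr : P.IsIrreducible) : ∃ m : ι → ℝ, (∀ i, 0 < m i) ∧ m ᵥ* P = m := by
  obtain ⟨m, hm, hmP⟩ := exists_ne_zero_vecMul_eq_self hP
  have habs := abs_vecMul_eq_self hP hmP
  obtain ⟨i, hi⟩ := Function.ne_iff.1 hm
  refine ⟨|m|, fun j => ?_, habs⟩
  induction reflTransGen_of_isIrreducible hirr i j with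
  | refl => exact abs_pos.2 hi
  | @tail j l _ hjl ih =>
    calc 0 < |m| j * P j l := mul_pos ih hjl
      _ ≤ ∑ i, |m| i * P i l := Finset.single_le_sum (f := fun i => |m| i * P i l)
          (fun i _ => mul_nonneg (abs_nonneg _) (nonneg_of_mem_rowStochastic hP))
          (Finset.mem_univ j)
      _ = |m| l := congrFun habs l

end StochasticMatrix

section Polyhedron

open Filter Topology

variable {ι : Type*} [Fintype ι] {Q : Matrix ι ι ℝ} {c y v : ι → ℝ} {i k : ι}

/-- The constraint functions `Q y + c` cutting out the domain of the switching problem; constraint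
`i` is active at `y` when the slack vanishes there. -/
def slack (Q : Matrix ι ι ℝ) (c y : ι → ℝ) : ι → ℝ := Q *ᵥ y + c

/-- The domain `D` of the switching problem, for a general matrix `Q` in place of `1 - P`. -/
def slackDomain (Q : Matrix ι ι ℝ) (c : ι → ℝ) : Set (ι → ℝ) := {y | ∀ i, 0 ≤ slack Q c y i}

/-- The outward normal cone `C(y)` of `D` at `y`. -/
def outwardNormalCone (D : Set (ι → ℝ)) (y : ι → ℝ) : Set (ι → ℝ) :=
  {v | ∀ z ∈ D, v ⬝ᵥ (z - y) ≤ 0}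

theorem slack_add_smul (Q : Matrix ι ι ℝ) (c y d : ι → ℝ) (t : ℝ) :
    slack Q c (y + t • d) = slack Q c y + t • Q *ᵥ d := by
  simp only [slack, mulVec_add, mulVec_smul]
  abel

theorem dotProduct_slack {m : ι → ℝ} (hm : m ᵥ* Q = 0) (c y : ι → ℝ) :
    m ⬝ᵥ slack Q c y = m ⬝ᵥ c := by
  rw [slack, dotProduct_add, dotProduct_mulVec, hm, zero_dotProduct, zero_add]

theorem slack_pos_of_mem_interior (hy : y ∈ interior (slackDomain Q c)) (hQ : Q.row i ≠ 0) :
    0 < slack Q c y i := by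
  have hline : ContinuousAt (fun t : ℝ => y - t • Q.row i) 0 := by fun_prop
  have hmem : ∀ᶠ t : ℝ in 𝓝 0, y - t • Q.row i ∈ slackDomain Q c :=
    hline (by simpa using mem_interior_iff_mem_nhds.1 hy)
  obtain ⟨t, ht, htpos⟩ := ((hmem.filter_mono nhdsWithin_le_nhds).and self_mem_nhdsWithin :
    ∀ᶠ t in 𝓝[>] (0 : ℝ), _).exists
  have hnorm : 0 < Q.row i ⬝ᵥ Q.row i := by simpa using dotProduct_star_self_pos_iff.2 hQ
  have hti : 0 ≤ slack Q c y i - t * (Q.row i ⬝ᵥ Q.row i) := by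
    have := ht i
    rwa [sub_eq_add_neg, ← neg_smul, slack_add_smul, Pi.add_apply, Pi.smul_apply, smul_eq_mul,
      neg_mul, ← sub_eq_add_neg] at this
  linarith [mul_pos htpos hnorm]

theorem dotProduct_nonpos_of_mem_outwardNormalCone (hy : y ∈ slackDomain Q c)
    (hv : v ∈ outwardNormalCone (slackDomain Q c) y) {d : ι → ℝ}
    (hd : ∀ i, slack Q c y i = 0 → 0 ≤ (Q *ᵥ d) i) : v ⬝ᵥ d ≤ 0 := by
  have hmem : ∀ᶠ t : ℝ in 𝓝[>] 0, y + t • d ∈ slackDomain Q c := by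
    refine eventually_all.2 fun i => ?_
    simp only [slack_add_smul, Pi.add_apply, Pi.smul_apply, smul_eq_mul]
    rcases (hy i).eq_or_lt with h0 | hpos
    · filter_upwards [self_mem_nhdsWithin] with t ht
      rw [← h0, zero_add]
      exact mul_nonneg ht.le (hd i h0.symm)
    · have hcont : ContinuousAt (fun t : ℝ => slack Q c y i + t * (Q *ᵥ d) i) 0 := by fun_prop
      refine (hcont.eventually_const_lt ?_).filter_mono nhdsWithin_le_nhds |>.mono fun _ h => h.le
      simpa using hpos
  obtain ⟨t, ht, htpos⟩ := (hmem.and self_mem_nhdsWithin).exists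
  have := hv _ ht
  rw [add_sub_cancel_left, dotProduct_smul, smul_eq_mul] at this
  exact nonpos_of_mul_nonpos_right this htpos

end Polyhedron

section VertexMetric

variable {ι : Type*} {Q V : Matrix ι ι ℝ} {c y v : ι → ℝ} {i k : ι}

/-- `V` is a metric adapted to the vertex of `D` opposite to the face `k`: positive definite, and
mapping each `e_i`, `i ≠ k`, to a positive multiple of the inward normal `Q_i`. -/
def IsVertexMetric (Q : Matrix ι ι ℝ) (k : ι) (V : Matrix ι ι ℝ) : Prop :=
  V.PosDef ∧ ∀ i ≠ k, ∃ γ > (0 : ℝ), V.col i = γ • Q.row i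

theorem IsVertexMetric.row_ne_zero (hV : IsVertexMetric Q k V) (hik : i ≠ k) : Q.row i ≠ 0 := by
  intro h0
  obtain ⟨γ, -, hcol⟩ := hV.2 i hik
  have hdiag : V i i = 0 := by simpa [h0] using congrFun hcol i
  exact hV.1.diag_pos.ne' hdiag

variable [Fintype ι]

theorem dotProduct_pos_of_nonempty_interior [Nontrivial ι] {V : ι → Matrix ι ι ℝ}
    (hV : ∀ k, IsVertexMetric Q k (V k)) {m : ι → ℝ} (hm : ∀ i, 0 < m i) (hmQ : m ᵥ* Q = 0)
    (hint : (interior (slackDomain Q c)).Nonempty) : 0 < m ⬝ᵥ c := by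
  obtain ⟨y, hy⟩ := hint
  rw [← dotProduct_slack hmQ c y]
  refine Finset.sum_pos (fun i _ => mul_pos (hm i) ?_) Finset.univ_nonempty
  obtain ⟨k, hki⟩ := exists_ne i
  exact slack_pos_of_mem_interior hy ((hV k).row_ne_zero hki.symm)

variable [DecidableEq ι]

theorem IsVertexMetric.exists_mulVec_inv_col (hV : IsVertexMetric Q k V) {j : ι} (hj : j ≠ k)
    (i : ι) : ∃ δ > (0 : ℝ), (Q *ᵥ V⁻¹.col i) j = δ * (1 : Matrix ι ι ℝ) j i := by
  obtain ⟨γ, hγ, hcol⟩ := hV.2 j hj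
  refine ⟨γ⁻¹, inv_pos.2 hγ, (eq_inv_mul_iff_mul_eq₀ hγ.ne').2 ?_⟩
  calc γ * (Q.row j ⬝ᵥ V⁻¹.col i) = V.col j ⬝ᵥ V⁻¹.col i := by
        rw [hcol, smul_dotProduct, smul_eq_mul]
    _ = (Vᵀ * V⁻¹) j i := rfl
    _ = (1 : Matrix ι ι ℝ) j i := by
        rw [show Vᵀ = V from hV.1.isHermitian, mul_nonsing_inv _ hV.1.det_pos.ne'.isUnit]

-- The columns of `V⁻¹` are dual to the active normals, hence feasible directions: testing `v`
-- against them reads off the coordinates of `V⁻¹ v`.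
theorem IsVertexMetric.inv_mulVec_nonpos (hV : IsVertexMetric Q k V)
    (hy : y ∈ slackDomain Q c) (hk : 0 < slack Q c y k)
    (hv : v ∈ outwardNormalCone (slackDomain Q c) y) (i : ι) :
    (V⁻¹ *ᵥ v) i ≤ 0 ∧ (0 < slack Q c y i → (V⁻¹ *ᵥ v) i = 0) := by
  have hcoord : v ⬝ᵥ V⁻¹.col i = (V⁻¹ *ᵥ v) i := by
    rw [mulVec, dotProduct_comm]
    exact congrArg (· ⬝ᵥ v) (congrFun (show V⁻¹ᵀ = V⁻¹ from hV.1.inv.isHermitian) i)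
  have hdual {j : ι} (hj : slack Q c y j = 0) :=
    hV.exists_mulVec_inv_col (fun h => hk.ne' (h ▸ hj) : j ≠ k) i
  have hnonpos : (V⁻¹ *ᵥ v) i ≤ 0 := by
    rw [← hcoord]
    refine dotProduct_nonpos_of_mem_outwardNormalCone hy hv fun j hj => ?_
    obtain ⟨δ, hδ, h⟩ := hdual hj
    rw [h, one_apply]
    positivity
  refine ⟨hnonpos, fun hi => hnonpos.antisymm (neg_nonpos.1 ?_)⟩
  rw [← hcoord, ← dotProduct_neg]
  refine dotProduct_nonpos_of_mem_outwardNormalCone hy hv fun j hj => ?_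
  obtain ⟨δ, -, h⟩ := hdual hj
  have hji : j ≠ i := fun hji => hi.ne' (hji ▸ hj)
  rw [mulVec_neg, Pi.neg_apply, h, one_apply_ne hji, mul_zero, neg_zero]

omit [DecidableEq ι] in
theorem IsVertexMetric.exists_eq_neg_vecMul (hV : IsVertexMetric Q k V)
    (hy : y ∈ slackDomain Q c) (hk : 0 < slack Q c y k)
    (hv : v ∈ outwardNormalCone (slackDomain Q c) y) :
    ∃ β : ι → ℝ, (∀ i, 0 ≤ β i) ∧ (∀ i, 0 < slack Q c y i → β i = 0) ∧ v = -(β ᵥ* Q) := by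
  classical
  have hx_nonpos (i : ι) := (hV.inv_mulVec_nonpos hy hk hv i).1
  have hx_zero (i : ι) := (hV.inv_mulVec_nonpos hy hk hv i).2
  have hVx : V *ᵥ (V⁻¹ *ᵥ v) = v := by
    rw [mulVec_mulVec, mul_nonsing_inv _ hV.1.det_pos.ne'.isUnit, one_mulVec]
  generalize V⁻¹ *ᵥ v = x at hx_nonpos hx_zero hVx
  choose! γ hγ hcol using hV.2
  refine ⟨fun i => -(γ i * x i), fun i => ?_, fun i hi => by simp [hx_zero i hi], ?_⟩
  · rcases eq_or_ne i k with rfl | hik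
    · simp [hx_zero i hk]
    · exact neg_nonneg.2 (mul_nonpos_of_nonneg_of_nonpos (hγ i hik).le (hx_nonpos i))
  · rw [← hVx]
    funext j
    rw [Pi.neg_apply, mulVec, vecMul, dotProduct, dotProduct, ← Finset.sum_neg_distrib]
    refine Finset.sum_congr rfl fun i _ => ?_
    rcases eq_or_ne i k with rfl | hik
    · simp [hx_zero i hk]
    · rw [show V j i = γ i * Q i j from congrFun (hcol i hik) j]
      ring

end VertexMetric

section ReversibleOff

open Relation

variable {ι : Type*} [DecidableEq ι] {P : Matrix ι ι ℝ} {γ : ι → ℝ} {i k : ι}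

/-- Detailed balance, with positive weights, for the chain with transition matrix `P` killed at the
state `k`. -/
def IsReversibleOff (P : Matrix ι ι ℝ) (k : ι) : Prop :=
  ∃ γ : ι → ℝ, (∀ i, 0 < γ i) ∧ ∀ i ≠ k, ∀ j ≠ k, γ i * P i j = γ j * P j i

/-- Edge weights `γ i * P i j` of the reversible chain off `k`; on the edges at `k` the flow into
`k` is used in both directions. -/
def conductance (P : Matrix ι ι ℝ) (γ : ι → ℝ) (k : ι) : Matrix ι ι ℝ :=
  of fun i j => if i = k then γ j * P j i else γ i * P i j

theorem conductance_of_ne (hik : i ≠ k) (j : ι) : conductance P γ k i j = γ i * P i j :=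
  if_neg hik

theorem isSymm_conductance (hγ : ∀ i ≠ k, ∀ j ≠ k, γ i * P i j = γ j * P j i) :
    (conductance P γ k).IsSymm := by
  refine IsSymm.ext fun i j => ?_
  by_cases hi : i = k <;> by_cases hj : j = k
  · rw [hi, hj]
  · simp [conductance, hi, hj]
  · simp [conductance, hi, hj]
  · rw [conductance_of_ne hi, conductance_of_ne hj, hγ i hi j hj]

theorem conductance_nonneg (hγ : ∀ i, 0 < γ i) (hP : ∀ i j, 0 ≤ P i j) (i j : ι) :
    0 ≤ conductance P γ k i j := by
  rw [conductance, of_apply]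
  split_ifs
  · exact mul_nonneg (hγ j).le (hP j i)
  · exact mul_nonneg (hγ i).le (hP i j)

theorem reflTransGen_conductance_pos (hirr : P.IsIrreducible) (hγ : ∀ i, 0 < γ i) (i : ι) :
    ReflTransGen (fun i j => 0 < conductance P γ k i j) i k := by
  refine ReflTransGen.mono ?_ i k (reflTransGen_and_ne (reflTransGen_of_isIrreducible hirr i k))
  rintro i j ⟨hik, hij⟩
  rw [conductance_of_ne hik]
  exact mul_pos (hγ i) hij

variable [Fintype ι]

theorem weightedLaplacian_conductance_col (hP : P ∈ rowStochastic ℝ ι)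
    (hγ : ∀ i ≠ k, ∀ j ≠ k, γ i * P i j = γ j * P j i) (hik : i ≠ k) :
    (weightedLaplacian (conductance P γ k)).col i = γ i • (1 - P).row i := by
  have hdegree : ∑ j, conductance P γ k i j = γ i := by
    simp_rw [conductance_of_ne hik, ← Finset.mul_sum, sum_row_of_mem_rowStochastic hP, mul_one]
  funext j
  rw [col_apply, (isSymm_weightedLaplacian (isSymm_conductance hγ)).apply, weightedLaplacian,
    Matrix.sub_apply, conductance_of_ne hik, diagonal_apply, hdegree, Pi.smul_apply, row_apply,
    Matrix.sub_apply, one_apply, smul_eq_mul, mul_sub, mul_ite, mul_one, mul_zero]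

theorem IsReversibleOff.exists_isVertexMetric (hrev : IsReversibleOff P k)
    (hP : P ∈ rowStochastic ℝ ι) (hirr : P.IsIrreducible) : ∃ V, IsVertexMetric (1 - P) k V := by
  obtain ⟨γ, hγ, hbal⟩ := hrev
  refine ⟨weightedLaplacian (conductance P γ k) + single k k 1,
    posDef_weightedLaplacian_add_single (isSymm_conductance hbal)
      (conductance_nonneg hγ hirr.nonneg) (reflTransGen_conductance_pos hirr hγ),
    fun i hik => ⟨γ i, hγ i, ?_⟩⟩
  rw [← weightedLaplacian_conductance_col hP hbal hik]
  funext j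
  simp [hik.symm]

end ReversibleOff

section ThreeStates

variable {P : Matrix (Fin 3) (Fin 3) ℝ}

-- The three states sum to `0` in `Fin 3`, so `-(i + k)` is the state other than `i ≠ k`.
theorem isReversibleOff_fin_three (hpos : ∀ i j, i ≠ j → 0 < P i j) (k : Fin 3) :
    IsReversibleOff P k := by
  have hthird {i : Fin 3} (hik : i ≠ k) : -(i + k) ≠ i := by
    revert i k; decide
  refine ⟨fun i => if i = k then 1 else P (-(i + k)) i, fun i => ?_, fun i hi j hj => ?_⟩
  · dsimp only
    split_ifs with hik
    · exact one_pos
    · exact hpos _ _ (hthird hik)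
  · rcases eq_or_ne i j with rfl | hij
    · rfl
    · have hi' : -(i + k) = j := by revert i j k; decide
      have hj' : -(j + k) = i := by revert i j k; decide
      simp only [hi, hj, if_false, hi', hj', mul_comm]

theorem mem_rowStochastic_switching {p q r : ℝ}
    (hp : 0 < p ∧ p < 1) (hq : 0 < q ∧ q < 1) (hr : 0 < r ∧ r < 1) :
    !![0, p, 1 - p; q, 0, 1 - q; r, 1 - r, 0] ∈ rowStochastic ℝ (Fin 3) := by
  refine mem_rowStochastic_iff_sum.2 ⟨fun i j => ?_, fun i => ?_⟩
  · fin_cases i <;> fin_cases j <;> simp <;> linarith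
  · fin_cases i <;> simp [Fin.sum_univ_three]

theorem switching_apply_pos {p q r : ℝ}
    (hp : 0 < p ∧ p < 1) (hq : 0 < q ∧ q < 1) (hr : 0 < r ∧ r < 1) (i j : Fin 3) (hij : i ≠ j) :
    0 < !![0, p, 1 - p; q, 0, 1 - q; r, 1 - r, 0] i j := by
  fin_cases i <;> fin_cases j <;> simp_all

end ThreeStates

section WeightedMetrics

open Set
open scoped Matrix.Norms.Operator

variable {ι : Type*} {χ : ℝ}

/-- Weights in `[0, 1]`, at least one of which is bounded below by `χ`. -/
def weightSet (ι : Type*) (χ : ℝ) : Set (ι → ℝ) := {w | (∀ k, w k ∈ Icc 0 1) ∧ ∃ k, χ ≤ w k}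

theorem isCompact_weightSet [Finite ι] : IsCompact (weightSet ι χ) := by
  have hset : weightSet ι χ = (univ.pi fun _ => Icc 0 1) ∩ ⋃ k, {w | χ ≤ w k} := by
    ext w
    simp only [weightSet, mem_ofPred_eq, mem_inter_iff, mem_univ_pi, mem_iUnion]
  rw [hset]
  exact (isCompact_univ_pi fun _ => isCompact_Icc).inter_right
    (isClosed_iUnion_of_finite fun k => isClosed_le continuous_const (continuous_apply k))

variable [Fintype ι] {V : ι → Matrix ι ι ℝ}

/-- The combinations `∑ k, w k • V k` with weights `w` in `weightSet ι χ`. -/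
def blendSet (V : ι → Matrix ι ι ℝ) (χ : ℝ) : Set (Matrix ι ι ℝ) :=
  (fun w => ∑ k, w k • V k) '' weightSet ι χ

theorem isCompact_blendSet : IsCompact (blendSet V χ) :=
  isCompact_weightSet.image (by fun_prop)

theorem posDef_of_mem_blendSet (hV : ∀ k, (V k).PosDef) (hχ : 0 < χ) {M : Matrix ι ι ℝ}
    (hM : M ∈ blendSet V χ) : M.PosDef := by
  classical
  obtain ⟨w, ⟨hw, k, hk⟩, rfl⟩ := hM
  have hpsd : (∑ l ∈ Finset.univ.erase k, w l • V l).PosSemidef :=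
    posSemidef_sum _ fun l _ => (hV l).posSemidef.smul (hw l).1
  dsimp only
  rw [← Finset.add_sum_erase _ _ (Finset.mem_univ k)]
  exact ((hV k).smul (hχ.trans_le hk)).add_posSemidef hpsd

end WeightedMetrics

section MetricField

open scoped Matrix.Norms.Operator

variable {ι : Type*} [Fintype ι] {Q : Matrix ι ι ℝ} {c m : ι → ℝ}

/-- Barycentric coordinates of `y` in the simplex `slackDomain Q c`, for `m` with `m ᵥ* Q = 0` and
`m ⬝ᵥ c > 0`; they are affine in `y` and make sense on the whole space. -/
noncomputable def baryCoord (Q : Matrix ι ι ℝ) (c m y : ι → ℝ) (i : ι) : ℝ :=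
  m i * slack Q c y i / (m ⬝ᵥ c)

theorem sum_baryCoord (hmQ : m ᵥ* Q = 0) (hmc : 0 < m ⬝ᵥ c) (y : ι → ℝ) :
    ∑ i, baryCoord Q c m y i = 1 := by
  simp only [baryCoord]
  rw [← Finset.sum_div, ← dotProduct, dotProduct_slack hmQ, div_self hmc.ne']

theorem exists_inv_card_le_baryCoord [Nonempty ι] (hmQ : m ᵥ* Q = 0) (hmc : 0 < m ⬝ᵥ c)
    (y : ι → ℝ) : ∃ k, (Fintype.card ι : ℝ)⁻¹ ≤ baryCoord Q c m y k := by
  obtain ⟨k, -, hk⟩ := Finset.exists_le_of_sum_le (s := Finset.univ) Finset.univ_nonempty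
    (f := fun _ => (Fintype.card ι : ℝ)⁻¹) (g := baryCoord Q c m y)
    (by simp [sum_baryCoord hmQ hmc])
  exact ⟨k, hk⟩

/-- The blend of the vertex metrics `V k` that suppresses `V k` on the half-space where the slack
`k` is nonpositive. -/
noncomputable def metricField (Q : Matrix ι ι ℝ) (c m : ι → ℝ) (V : ι → Matrix ι ι ℝ) (y : ι → ℝ) :
    Matrix ι ι ℝ :=
  ∑ k, Real.smoothTransition (baryCoord Q c m y k) • V k

variable {V : ι → Matrix ι ι ℝ}

theorem boundedContDiff_baryCoord_comp {n : ℕ∞} {F : Type*} [NormedAddCommGroup F]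
    [NormedSpace ℝ F] {g : ℝ → F} (hg : BoundedContDiff n g) (k : ι) :
    BoundedContDiff n fun y => g (baryCoord Q c m y k) := by
  convert hg.comp_clm_add_const ((m k / (m ⬝ᵥ c)) • (ContinuousLinearMap.proj k).comp
    Q.mulVecLin.toContinuousLinearMap) (m k * c k / (m ⬝ᵥ c)) using 3 with y
  simp only [baryCoord, slack, Pi.add_apply, _root_.smul_apply, ContinuousLinearMap.comp_apply,
    LinearMap.coe_toContinuousLinearMap', mulVecBilin_apply, ContinuousLinearMap.proj_apply,
    smul_eq_mul]
  ring

theorem boundedContDiff_metricField (n : ℕ∞) : BoundedContDiff n (metricField Q c m V) := by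
  refine .sum fun k _ => ?_
  exact (boundedContDiff_baryCoord_comp (boundedContDiff_smoothTransition n) k).clm_comp
    (ContinuousLinearMap.toSpanSingleton ℝ (V k))

theorem metricField_mem_blendSet [Nonempty ι] (hmQ : m ᵥ* Q = 0) (hmc : 0 < m ⬝ᵥ c) (y : ι → ℝ) :
    metricField Q c m V y ∈ blendSet V (Real.smoothTransition (Fintype.card ι : ℝ)⁻¹) := by
  obtain ⟨k, hk⟩ := exists_inv_card_le_baryCoord hmQ hmc y
  exact ⟨fun k => Real.smoothTransition (baryCoord Q c m y k),
    ⟨fun k => ⟨Real.smoothTransition.nonneg _, Real.smoothTransition.le_one _⟩,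
      k, Real.smoothTransition.monotone hk⟩, rfl⟩

theorem exists_metricField_col_eq_smul [Nonempty ι] (hV : ∀ k, IsVertexMetric Q k (V k))
    (hmQ : m ᵥ* Q = 0) (hmc : 0 < m ⬝ᵥ c) {y : ι → ℝ} {i : ι} (hi : slack Q c y i = 0) :
    ∃ γ > (0 : ℝ), (metricField Q c m V y).col i = γ • Q.row i := by
  have hi0 : baryCoord Q c m y i = 0 := by rw [baryCoord, hi, mul_zero, zero_div]
  obtain ⟨k, hk⟩ := exists_inv_card_le_baryCoord hmQ hmc y
  have hkpos : 0 < baryCoord Q c m y k := hk.trans_lt' (by positivity)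
  have hik : i ≠ k := by
    rintro rfl
    exact hkpos.ne' hi0
  choose! γ hγ hcol using fun k => (hV k).2 i
  have hterm (l : ι) : Real.smoothTransition (baryCoord Q c m y l) • (V l).col i
      = (Real.smoothTransition (baryCoord Q c m y l) * γ l) • Q.row i := by
    rcases eq_or_ne i l with rfl | hil
    · simp [hi0]
    · rw [hcol l hil, smul_smul]
  refine ⟨∑ l, Real.smoothTransition (baryCoord Q c m y l) * γ l,
    Finset.sum_pos' (fun l _ => ?_) ⟨k, Finset.mem_univ k,
      mul_pos (Real.smoothTransition.pos_of_pos hkpos) (hγ k hik)⟩, ?_⟩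
  · rcases eq_or_ne i l with rfl | hil
    · simp [hi0]
    · exact mul_nonneg (Real.smoothTransition.nonneg _) (hγ l hil).le
  · rw [Finset.sum_smul, ← Finset.sum_congr rfl fun l _ => hterm l]
    funext j
    simp [metricField, Matrix.sum_apply]

end MetricField

section ReflectionOperator

open Filter
open scoped ContDiff Matrix.Norms.Operator

section Entries

variable {ι E : Type*} [Fintype ι] [NormedAddCommGroup E] [NormedSpace ℝ E]
  {n : ℕ∞ω} {f : E → Matrix ι ι ℝ}

theorem BoundedContDiff.eventually_abs_apply_le (hf : BoundedContDiff n f) :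
    ∀ᶠ L : ℝ in atTop, ∀ x i j, |f x i j| ≤ L := by
  filter_upwards [eventually_all.2 fun i => eventually_all.2 fun j =>
    (hf.matrix_apply i j).eventually_norm_le] with L hL x i j using hL i j x

theorem BoundedContDiff.eventually_norm_fderiv_apply_le (hf : BoundedContDiff n f) (hn : 1 ≤ n) :
    ∀ᶠ L : ℝ in atTop, ∀ x i j, ‖fderiv ℝ (fun x' => f x' i j) x‖ ≤ L := by
  filter_upwards [eventually_all.2 fun i => eventually_all.2 fun j =>
    (hf.matrix_apply i j).eventually_norm_fderiv_le hn] with L hL x i j using hL i j x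

theorem BoundedContDiff.eventually_norm_fderiv_fderiv_apply_le (hf : BoundedContDiff n f)
    (hn : 2 ≤ n) :
    ∀ᶠ L : ℝ in atTop, ∀ x i j, ‖fderiv ℝ (fderiv ℝ fun x' => f x' i j) x‖ ≤ L := by
  filter_upwards [eventually_all.2 fun i => eventually_all.2 fun j =>
    (hf.matrix_apply i j).eventually_norm_fderiv_fderiv_le hn] with L hL x i j using hL i j x

end Entries

variable {ι : Type*} [Fintype ι] [Nonempty ι] {Q : Matrix ι ι ℝ} {c m : ι → ℝ}
  {V : ι → Matrix ι ι ℝ}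

theorem posDef_of_mem_blendSet_smoothTransition (hV : ∀ k, (V k).PosDef) :
    ∀ M ∈ blendSet V (Real.smoothTransition (Fintype.card ι : ℝ)⁻¹), M.PosDef := fun _ hM =>
  posDef_of_mem_blendSet hV (Real.smoothTransition.pos_of_pos (by positivity)) hM

theorem posDef_metricField (hV : ∀ k, (V k).PosDef) (hmQ : m ᵥ* Q = 0) (hmc : 0 < m ⬝ᵥ c)
    (y : ι → ℝ) : (metricField Q c m V y).PosDef :=
  posDef_of_mem_blendSet_smoothTransition hV _ (metricField_mem_blendSet hmQ hmc y)

variable [DecidableEq ι]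

theorem boundedContDiff_inv_metricField (hV : ∀ k, (V k).PosDef) (hmQ : m ᵥ* Q = 0)
    (hmc : 0 < m ⬝ᵥ c) (n : ℕ∞) : BoundedContDiff n fun y => (metricField Q c m V y)⁻¹ :=
  (boundedContDiff_metricField n).matrix_inv isCompact_blendSet
    (fun M hM => (posDef_of_mem_blendSet_smoothTransition hV M hM).isUnit)
    (metricField_mem_blendSet hmQ hmc)

theorem eventually_inv_metricField_bounds (hV : ∀ k, (V k).PosDef) (hmQ : m ᵥ* Q = 0)
    (hmc : 0 < m ⬝ᵥ c) :
    ∀ᶠ L : ℝ in atTop, ∀ y v : ι → ℝ,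
      L⁻¹ * (v ⬝ᵥ v) ≤ v ⬝ᵥ ((metricField Q c m V y)⁻¹ *ᵥ v) ∧
        v ⬝ᵥ ((metricField Q c m V y)⁻¹ *ᵥ v) ≤ L * (v ⬝ᵥ v) := by
  have hpos := posDef_of_mem_blendSet_smoothTransition hV
  have hK := isCompact_image_matrix_inv isCompact_blendSet fun M hM => (hpos M hM).isUnit
  filter_upwards [eventually_quadraticForm_bounds hK
    (Set.forall_mem_image.2 fun M hM => (hpos M hM).inv)] with L hL y v
  exact hL _ (Set.mem_image_of_mem _ (metricField_mem_blendSet hmQ hmc y)) v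

theorem exists_inv_metricField_mulVec_eq_neg (hV : ∀ k, IsVertexMetric Q k (V k))
    (hmQ : m ᵥ* Q = 0) (hmc : 0 < m ⬝ᵥ c) {y v : ι → ℝ}
    (hy : y ∈ slackDomain Q c) (hv : v ∈ outwardNormalCone (slackDomain Q c) y) :
    ∃ α : ι → ℝ, (∀ i, 0 ≤ α i) ∧ (∀ i, 0 < slack Q c y i → α i = 0) ∧
      (metricField Q c m V y)⁻¹ *ᵥ v = -α := by
  obtain ⟨k, hk⟩ := exists_inv_card_le_baryCoord hmQ hmc y
  have hsk : slack Q c y k ≠ 0 := by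
    intro h0
    rw [baryCoord, h0, mul_zero, zero_div] at hk
    exact hk.not_gt (by positivity)
  obtain ⟨β, hβ, hβ0, rfl⟩ := (hV k).exists_eq_neg_vecMul hy ((hy k).lt_of_ne' hsk) hv
  choose! γ hγ hcol using fun i => exists_metricField_col_eq_smul (i := i) (y := y) hV hmQ hmc
  have hactive (i : ι) : β i = 0 ∨ slack Q c y i = 0 :=
    (hy i).eq_or_lt.elim (fun h => .inr h.symm) fun h => .inl (hβ0 i h)
  have hGα : metricField Q c m V y *ᵥ (fun i => (γ i)⁻¹ * β i) = β ᵥ* Q := by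
    funext j
    rw [mulVec, vecMul, dotProduct, dotProduct]
    refine Finset.sum_congr rfl fun i _ => ?_
    rcases hactive i with h0 | h0
    · simp only [h0, mul_zero, zero_mul]
    · rw [show metricField Q c m V y j i = γ i * Q i j from congrFun (hcol i h0) j]
      field_simp [(hγ i h0).ne']
  refine ⟨fun i => (γ i)⁻¹ * β i, fun i => ?_, fun i hi => by simp [hβ0 i hi], ?_⟩
  · rcases hactive i with h0 | h0
    · simp [h0]
    · exact mul_nonneg (inv_pos.2 (hγ i h0)).le (hβ i)
  · have hdet := (posDef_metricField (fun k => (hV k).1) hmQ hmc y).det_pos.ne'.isUnit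
    rw [← hGα, mulVec_neg, mulVec_mulVec, nonsing_inv_mul _ hdet, one_mulVec]

end ReflectionOperator

section Switching

variable {ι : Type*} [Fintype ι] [DecidableEq ι]

theorem slack_one_sub_apply (P : Matrix ι ι ℝ) (c y : ι → ℝ) (i : ι) :
    slack (1 - P) c y i = y i - ((∑ j, P i j * y j) - c i) := by
  rw [slack, sub_mulVec, one_mulVec, Pi.add_apply, Pi.sub_apply, mulVec, dotProduct]
  ring

theorem slackDomain_one_sub (P : Matrix ι ι ℝ) (c : ι → ℝ) :
    slackDomain (1 - P) c = {x | ∀ i, (∑ j, P i j * x j) - c i ≤ x i} := by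
  simp only [slackDomain, slack_one_sub_apply, sub_nonneg]

end Switching

open scoped Matrix.Norms.Operator in
theorem existence_of_smooth_symmetric_reflection_operator_dim3_general
    {ι : Type*} [Fintype ι] [DecidableEq ι] [Nontrivial ι] {P : Matrix ι ι ℝ}
    (hP : P ∈ rowStochastic ℝ ι) (hirr : P.IsIrreducible) (hrev : ∀ k, IsReversibleOff P k)
    (c : ι → ℝ) (D : Set (ι → ℝ)) (hD : D = {x | ∀ i, (∑ j, P i j * x j) - c i ≤ x i})
    (hint : (interior D).Nonempty) :
    ∃ (H : (ι → ℝ) → Matrix ι ι ℝ) (L : ℝ),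
      1 ≤ L ∧
      (∀ y, (H y).IsSymm) ∧
      (∀ y v : ι → ℝ,
        L⁻¹ * (∑ i, (v i) ^ 2) ≤ v ⬝ᵥ (H y *ᵥ v) ∧
        v ⬝ᵥ (H y *ᵥ v) ≤ L * (∑ i, (v i) ^ 2)) ∧
      (∀ y i j, |H y i j| ≤ L) ∧
      (∀ i j : ι, ContDiff ℝ 1 (fun y => H y i j)) ∧
      (∀ (y : ι → ℝ) (i j : ι), ‖fderiv ℝ (fun y' => H y' i j) y‖ ≤ L) ∧
      (∀ i j : ι, ContDiff ℝ 2 (fun y => (H y)⁻¹ i j)) ∧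
      (∀ (y : ι → ℝ) (i j : ι),
        |(H y)⁻¹ i j| ≤ L ∧
        ‖fderiv ℝ (fun y' => (H y')⁻¹ i j) y‖ ≤ L ∧
        ‖fderiv ℝ (fderiv ℝ (fun y' => (H y')⁻¹ i j)) y‖ ≤ L) ∧
      (∀ y ∈ D, ∀ v : ι → ℝ,
        (∀ z ∈ D, (∑ i, v i * (z i - y i)) ≤ 0) →
        ∃ α : ι → ℝ, (∀ i, 0 ≤ α i) ∧
          (∀ i, (∑ j, P i j * y j) - c i < y i → α i = 0) ∧
          H y *ᵥ v = -α) := by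
  rw [← slackDomain_one_sub] at hD
  subst hD
  obtain ⟨m, hm, hmP⟩ := exists_pos_vecMul_eq_self hP hirr
  have hmQ : m ᵥ* (1 - P) = 0 := by rw [vecMul_sub, vecMul_one, hmP, sub_self]
  choose V hV using fun k => (hrev k).exists_isVertexMetric hP hirr
  have hVpd (k : ι) := (hV k).1
  have hmc := dotProduct_pos_of_nonempty_interior hV hm hmQ hint
  have hpd := posDef_metricField (c := c) hVpd hmQ hmc
  have hG : BoundedContDiff 2 (metricField (1 - P) c m V) := boundedContDiff_metricField 2
  have hH := boundedContDiff_inv_metricField hVpd hmQ hmc 1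
  obtain ⟨L, hL, hquad, hH0, hH1, hG0, hG1, hG2⟩ := ((Filter.eventually_ge_atTop 1).and <|
    (eventually_inv_metricField_bounds hVpd hmQ hmc).and <|
    hH.eventually_abs_apply_le.and <| (hH.eventually_norm_fderiv_apply_le le_rfl).and <|
    hG.eventually_abs_apply_le.and <| (hG.eventually_norm_fderiv_apply_le one_le_two).and <|
    hG.eventually_norm_fderiv_fderiv_apply_le le_rfl).exists
  have hinv (y : ι → ℝ) : (metricField (1 - P) c m V y)⁻¹⁻¹ = metricField (1 - P) c m V y :=
    nonsing_inv_nonsing_inv _ (hpd y).det_pos.ne'.isUnit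
  refine ⟨fun y => (metricField (1 - P) c m V y)⁻¹, L, hL, fun y => (hpd y).inv.isHermitian,
    fun y v => ?_, hH0, fun i j => (hH.matrix_apply i j).contDiff, hH1, fun i j => ?_,
    fun y i j => ?_, fun y hy v hv => ?_⟩
  · simpa only [dotProduct, sq] using hquad y v
  · simpa only [hinv] using (hG.matrix_apply i j).contDiff
  · simpa only [hinv] using ⟨hG0 y i j, hG1 y i j, hG2 y i j⟩
  · simpa only [slack_one_sub_apply, sub_pos] using
      exists_inv_metricField_mulVec_eq_neg hV hmQ hmc hy hv

/-- The uncontrolled randomised switching problem in dimension 3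
with transition matrix `P = !![0, p, 1−p; q, 0, 1−q; r, 1−r, 0]`, `0 < p, q, r < 1`,
and cost vector `c̄` such that `D` has nonempty interior.  There exist
`H : ℝ³ → S₃(ℝ)` and `L ≥ 1` such that:
(1) `L⁻¹|v|² ≤ vᵀ H(y) v ≤ L|v|²` and `|H(y)| ≤ L` (entrywise);
(2) `H` is `C¹` with `|∂H| ≤ L`, and `y ↦ H(y)⁻¹` is `C²` with
`|H⁻¹| + |∂H⁻¹| + |∂²H⁻¹| ≤ L` (entrywise, derivative norms bounded by `L`);
(3) for every `y ∈ D` and `v` in the outward normal cone at `y`, `H(y) v` lies in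
the reflection cone `C_o(y)`. -/
theorem existence_of_smooth_symmetric_reflection_operator_dim3
    (p q r : ℝ)
    (hp : 0 < p ∧ p < 1) (hq : 0 < q ∧ q < 1) (hr : 0 < r ∧ r < 1)
    (P : Matrix (Fin 3) (Fin 3) ℝ)
    (hP : P = !![0, p, 1 - p; q, 0, 1 - q; r, 1 - r, 0])
    (c : Fin 3 → ℝ)
    (D : Set (Fin 3 → ℝ))
    (hD : D = {x | ∀ i, (∑ j, P i j * x j) - c i ≤ x i})
    (hint : (interior D).Nonempty) :
    ∃ (H : (Fin 3 → ℝ) → Matrix (Fin 3) (Fin 3) ℝ) (L : ℝ),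
      1 ≤ L ∧
      (∀ y, (H y).IsSymm) ∧
      (∀ y v : Fin 3 → ℝ,
        L⁻¹ * (∑ i, (v i) ^ 2) ≤ v ⬝ᵥ (H y *ᵥ v) ∧
        v ⬝ᵥ (H y *ᵥ v) ≤ L * (∑ i, (v i) ^ 2)) ∧
      (∀ y i j, |H y i j| ≤ L) ∧
      (∀ i j : Fin 3, ContDiff ℝ 1 (fun y => H y i j)) ∧
      (∀ (y : Fin 3 → ℝ) (i j : Fin 3), ‖fderiv ℝ (fun y' => H y' i j) y‖ ≤ L) ∧
      (∀ i j : Fin 3, ContDiff ℝ 2 (fun y => (H y)⁻¹ i j)) ∧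
      (∀ (y : Fin 3 → ℝ) (i j : Fin 3),
        |(H y)⁻¹ i j| ≤ L ∧
        ‖fderiv ℝ (fun y' => (H y')⁻¹ i j) y‖ ≤ L ∧
        ‖fderiv ℝ (fderiv ℝ (fun y' => (H y')⁻¹ i j)) y‖ ≤ L) ∧
      (∀ y ∈ D, ∀ v : Fin 3 → ℝ,
        (∀ z ∈ D, (∑ i, v i * (z i - y i)) ≤ 0) →
        ∃ α : Fin 3 → ℝ, (∀ i, 0 ≤ α i) ∧
          (∀ i, (∑ j, P i j * y j) - c i < y i → α i = 0) ∧
          H y *ᵥ v = -α) := by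
  subst hP
  have hP := mem_rowStochastic_switching hp hq hr
  have hpos := switching_apply_pos hp hq hr
  exact existence_of_smooth_symmetric_reflection_operator_dim3_general hP
    (isIrreducible_of_pos (fun _ _ => nonneg_of_mem_rowStochastic hP) hpos)
    (isReversibleOff_fin_three hpos) c D hD hint
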